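/- arXiv:2305.07275 — 5 statements merged into one kernel-verified Lean document; each statement's English description precedes it below -/
import Mathlib

section
/- Let Z ⊆ ℝ^n be closed. If for each player i the preference map P_i : ℝ^n ⇉ ℝ^{n_i} is lower semicontinuous on Z, then the set-valued map T(y) = ∏_i T_i(y), where T_i(y) = co(𝒩_i(y) ∩ S_i) with 𝒩_i(y) = (co(P_i(y)) − {y_i})° and S_i the unit sphere of ℝ^{n_i}, is upper semicontinuous on Z. -/
open scoped RealInnerProductSpace

/-- `ℝ^m` as a Euclidean space. -/
abbrev Vec (m : ℕ) : Type := EuclideanSpace ℝ (Fin m)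

/-- The joint strategy space `ℝ^n = ∏_{i=1}^N ℝ^{n_i}`. -/
abbrev Strat (N : ℕ) (d : Fin N → ℕ) : Type := PiLp 2 fun i : Fin N => Vec (d i)

/-- Lower semicontinuity of a set-valued map `F` on a set `A`. -/
def LscOn {α β : Type*} [TopologicalSpace α] [TopologicalSpace β]
    (F : α → Set β) (A : Set α) : Prop :=
  ∀ a ∈ A, ∀ V : Set β, IsOpen V → (F a ∩ V).Nonempty →
    ∃ U : Set α, IsOpen U ∧ a ∈ U ∧ ∀ a' ∈ U ∩ A, (F a' ∩ V).Nonempty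

/-- Upper semicontinuity of a set-valued map `F` on a set `A`. -/
def UscOn {α β : Type*} [TopologicalSpace α] [TopologicalSpace β]
    (F : α → Set β) (A : Set α) : Prop :=
  ∀ a ∈ A, ∀ V : Set β, IsOpen V → F a ⊆ V →
    ∃ U : Set α, IsOpen U ∧ a ∈ U ∧ ∀ a' ∈ U ∩ A, F a' ⊆ V

open Topology in
theorem aux_isCompact_convexHull {m : ℕ} {K : Set (Vec m)} (hK : IsCompact K) :
    IsCompact (convexHull ℝ K) := by
  have key : convexHull ℝ K = ⋃ k : Fin (m + 2),
      (fun p : (Fin k → ℝ) × (Fin k → Vec m) => ∑ j, p.1 j • p.2 j) ''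
        (stdSimplex ℝ (Fin k) ×ˢ Set.pi Set.univ (fun _ => K)) := by
    apply Set.Subset.antisymm
    · intro x hx
      obtain ⟨ι, hι, z, w, hz, hai, hw, hw1, hx⟩ := eq_pos_convex_span_of_mem_convexHull hx
      have hc : Fintype.card ι ≤ m + 1 := by
        refine hai.card_le_finrank_succ.trans ?_
        have := Submodule.finrank_le (vectorSpan ℝ (Set.range z))
        simp at this
        omega
      let e := Fintype.equivFin ι
      refine Set.mem_iUnion.2 ⟨⟨Fintype.card ι, by omega⟩, (w ∘ e.symm, z ∘ e.symm), ⟨⟨?_, ?_⟩, ?_⟩, ?_⟩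
      · intro j; exact (hw _).le
      · rw [← hw1]; exact e.symm.sum_comp w
      · intro j _; exact hz ⟨_, rfl⟩
      · rw [← hx]; exact e.symm.sum_comp (fun i => w i • z i)
    · intro x hx
      obtain ⟨k, ⟨w, z⟩, ⟨⟨h0, h1⟩, hz⟩, rfl⟩ := Set.mem_iUnion.1 hx
      exact (convex_convexHull ℝ K).sum_mem (fun j _ => h0 j) h1
        (fun j _ => subset_convexHull ℝ K (hz j trivial))
  rw [key]
  refine isCompact_iUnion fun k => IsCompact.image ?_ (by fun_prop)
  exact (isCompact_stdSimplex ℝ _).prod (isCompact_univ_pi fun _ => hK)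

theorem aux_polar {m : ℕ} (A : Set (Vec m)) (w y : Vec m) :
    (∀ z ∈ convexHull ℝ A, ⟪w, z - y⟫ ≤ 0) ↔ ∀ z ∈ A, ⟪w, z - y⟫ ≤ 0 := by
  refine ⟨fun h z hz => h z (subset_convexHull ℝ A hz), fun h z hz => ?_⟩
  have hc : Convex ℝ {z : Vec m | ⟪w, z⟫ ≤ ⟪w, y⟫} :=
    convex_halfSpace_le (IsLinearMap.mk (fun a b => inner_add_right _ _ _)
      (fun c a => by simp [inner_smul_right])) _
  have hs : A ⊆ {z : Vec m | ⟪w, z⟫ ≤ ⟪w, y⟫} := fun z hz => by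
    have := h z hz
    rw [inner_sub_right] at this
    simp only [Set.mem_setOf_eq]; linarith
  have : ⟪w, z⟫ ≤ ⟪w, y⟫ := convexHull_min hs hc hz
  rw [inner_sub_right]; linarith

open Topology Filter in
theorem aux_usc {N : ℕ} {d : Fin N → ℕ} {Z : Set (Strat N d)} (i : Fin N)
    (P : Strat N d → Set (Vec (d i))) (hP : LscOn P Z) (a : Strat N d) (ha : a ∈ Z)
    (W : Set (Vec (d i))) (hW : IsOpen W)
    (h : {w : Vec (d i) | ∀ z ∈ convexHull ℝ (P a), ⟪w, z - a i⟫ ≤ 0}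
          ∩ Metric.sphere (0 : Vec (d i)) 1 ⊆ W) :
    ∀ᶠ y in 𝓝 a, y ∈ Z → {w : Vec (d i) | ∀ z ∈ convexHull ℝ (P y), ⟪w, z - y i⟫ ≤ 0}
          ∩ Metric.sphere (0 : Vec (d i)) 1 ⊆ W := by
  simp only [aux_polar] at h ⊢
  have hK : IsCompact (Metric.sphere (0 : Vec (d i)) 1 \ W) := (isCompact_sphere _ _).diff hW
  have := hK.eventually_forall_of_forall_eventually (x₀ := a)
    (P := fun y w => y ∈ Z → ∃ z ∈ P y, 0 < ⟪w, z - y i⟫) ?_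
  · filter_upwards [this] with y hy hyZ w hw
    by_contra hwW
    obtain ⟨z, hz, hlt⟩ := hy w ⟨hw.2, hwW⟩ hyZ
    exact absurd (hw.1 z hz) (not_le.2 hlt)
  · intro w hw
    have : ∃ z ∈ P a, 0 < ⟪w, z - a i⟫ := by
      by_contra! hcon
      exact hw.2 (h ⟨hcon, hw.1⟩)
    obtain ⟨z, hz, hlt⟩ := this
    have hcont : Continuous (fun p : (Strat N d × Vec (d i)) × Vec (d i) =>
        ⟪p.1.2, p.2 - p.1.1 i⟫) := by fun_prop
    have hev : ∀ᶠ p in 𝓝 ((a, w), z), 0 < ⟪p.1.2, p.2 - p.1.1 i⟫ :=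
      (isOpen_lt continuous_const hcont).mem_nhds hlt
    rw [nhds_prod_eq, eventually_prod_iff] at hev
    obtain ⟨pa, hpa, pb, hpb, hab⟩ := hev
    obtain ⟨V, hVb, hVo, hzV⟩ := mem_nhds_iff.1 hpb
    obtain ⟨U, hUo, haU, hU⟩ := hP a ha V hVo ⟨z, hz, hzV⟩
    have h1 : ∀ᶠ p : Strat N d × Vec (d i) in 𝓝 (a, w), p.1 ∈ U :=
      continuous_fst.continuousAt.eventually_mem (hUo.mem_nhds haU)
    filter_upwards [hpa, h1] with p hp hpU hpZ
    obtain ⟨z', hz', hz'V⟩ := hU p.1 ⟨hpU, hpZ⟩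
    exact ⟨z', hz', hab hp (hVb hz'V)⟩

/-- If `Z ⊆ ℝ^n` is closed and each preference map `P_i` is l.s.c. on `Z`,
then the map `T(y) = ∏_i co(𝒩_i(y) ∩ S_i)`, with `𝒩_i(y) = (co(P_i(y)) − {y_i})°` and
`S_i` the unit sphere, is u.s.c. on `Z`. -/
theorem T_usc_of_lsc_preferences (N : ℕ) (hN : 1 ≤ N) (d : Fin N → ℕ)
    (Z : Set (Strat N d)) (hZclosed : IsClosed Z)
    (P : ∀ i : Fin N, Strat N d → Set (Vec (d i)))
    (hPlsc : ∀ i, LscOn (P i) Z)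
    (T : Strat N d → Set (Strat N d))
    (hT : ∀ y : Strat N d, T y = {v : Strat N d | ∀ i : Fin N,
      v i ∈ convexHull ℝ
        ({w : Vec (d i) | ∀ z ∈ convexHull ℝ (P i y), ⟪w, z - y i⟫ ≤ 0}
          ∩ Metric.sphere (0 : Vec (d i)) 1)}) :
    UscOn T Z := by
  intro a ha V hV haV
  let K : ∀ (i : Fin N), Strat N d → Set (Vec (d i)) := fun i y =>
    {w : Vec (d i) | ∀ z ∈ convexHull ℝ (P i y), ⟪w, z - y i⟫ ≤ 0}
          ∩ Metric.sphere (0 : Vec (d i)) 1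
  have hKc : ∀ i, IsCompact (K i a) := fun i => by
    refine (isCompact_sphere _ _).inter_left ?_
    have : {w : Vec (d i) | ∀ z ∈ convexHull ℝ (P i a), ⟪w, z - a i⟫ ≤ 0} =
        ⋂ z ∈ convexHull ℝ (P i a), {w : Vec (d i) | ⟪w, z - a i⟫ ≤ 0} := by
      ext w; simp
    rw [this]
    exact isClosed_biInter fun z _ => isClosed_le (by fun_prop) continuous_const
  let C : ∀ i, Set (Vec (d i)) := fun i => convexHull ℝ (K i a)
  have hC : IsCompact (Set.pi Set.univ C) :=
    isCompact_univ_pi fun i => aux_isCompact_convexHull (hKc i)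
  have hVo : IsOpen ((fun v : ∀ i, Vec (d i) => (WithLp.toLp 2 v : Strat N d)) ⁻¹' V) :=
    hV.preimage (PiLp.continuous_toLp 2 _)
  have hsub : Set.pi Set.univ C ⊆
      (fun v : ∀ i, Vec (d i) => (WithLp.toLp 2 v : Strat N d)) ⁻¹' V := by
    intro v hv
    apply haV
    rw [hT]
    exact fun i => hv i trivial
  obtain ⟨δ, hδ, hth⟩ := hC.exists_thickening_subset_open hVo hsub
  have hev : ∀ᶠ y in nhds a, ∀ i, y ∈ Z → K i y ⊆ Metric.thickening δ (C i) :=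
    Filter.eventually_all.2 fun i => aux_usc i (P i) (hPlsc i) a ha _ Metric.isOpen_thickening
      ((subset_convexHull ℝ (K i a)).trans (Metric.self_subset_thickening hδ _))
  obtain ⟨U, hU, hUo, haU⟩ := mem_nhds_iff.1 hev
  refine ⟨U, hUo, haU, ?_⟩
  rintro y ⟨hyU, hyZ⟩ v hv
  rw [hT] at hv
  have hv' : ∀ i, ∃ c ∈ C i, dist (v i) c < δ := fun i =>
    Metric.mem_thickening_iff.1 (convexHull_min (hU hyU i hyZ)
      ((convex_convexHull ℝ (K i a)).thickening δ) (hv i))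
  choose c hcC hcd using hv'
  have : (fun i => v i) ∈ Metric.thickening δ (Set.pi Set.univ C) :=
    Metric.mem_thickening_iff.2 ⟨c, fun i _ => hcC i, (dist_pi_lt_iff hδ).2 hcd⟩
  exact hth this
end

section
/- Assume for each player i: (a) X_i ⊆ ℝ^{n_i} is nonempty, convex and closed; (b) K_i : X ⇉ ℝ^{n_i} has nonempty values; (c) P_i(y) is an open subset of ℝ^{n_i} for every y ∈ ∏_i co(cl(K_i(X))). Then every projected solution of the quasi-variational inequality QVI(T,K), where K(x) = ∏_i K_i(x) and T(y) = ∏_i co(((co(P_i(y)) − {y_i})°) ∩ S_i) with S_i the unit sphere of ℝ^{n_i}, is a projected solution of the generalized Nash game Γ = (X_i,K_i,P_i)_i. -/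
open scoped RealInnerProductSpace

/-- Under (a) each `X_i` nonempty convex closed, (b) each `K_i`
nonempty-valued on `X`, (c) each `P_i(y)` open for `y ∈ ∏_i co(cl(K_i(X)))`,
every projected solution of `QVI(T,K)` is a projected solution of the
generalized Nash game `Γ = (X_i, K_i, P_i)_i`. -/
theorem projected_QVI_solution_is_projected_GNEP_solution
    (N : ℕ) (hN : 1 ≤ N) (d : Fin N → ℕ)
    (Xi : ∀ i : Fin N, Set (Vec (d i)))
    (Ki : ∀ i : Fin N, Strat N d → Set (Vec (d i)))
    (P : ∀ i : Fin N, Strat N d → Set (Vec (d i)))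
    -- the joint choice set `X = ∏ X_i`
    (X : Set (Strat N d)) (hX : X = {x : Strat N d | ∀ i, x i ∈ Xi i})
    -- the set `∏_i co(cl(K_i(X)))`
    (Q : Set (Strat N d))
    (hQ : Q = {y : Strat N d | ∀ i, y i ∈ convexHull ℝ (closure (⋃ x ∈ X, Ki i x))})
    -- the joint constraint map `K(x) = ∏ K_i(x)`
    (K : Strat N d → Set (Strat N d))
    (hK : ∀ x : Strat N d, K x = {y : Strat N d | ∀ i, y i ∈ Ki i x})
    -- the map `T(y) = ∏_i co((co(P_i(y)) − {y_i})° ∩ S_i)`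
    (T : Strat N d → Set (Strat N d))
    (hT : ∀ y : Strat N d, T y = {v : Strat N d | ∀ i : Fin N,
      v i ∈ convexHull ℝ
        ({w : Vec (d i) | ∀ z ∈ convexHull ℝ (P i y), ⟪w, z - y i⟫ ≤ 0}
          ∩ Metric.sphere (0 : Vec (d i)) 1)})
    -- hypotheses (a), (b), (c)
    (ha : ∀ i, (Xi i).Nonempty ∧ Convex ℝ (Xi i) ∧ IsClosed (Xi i))
    (hb : ∀ i, ∀ x ∈ X, (Ki i x).Nonempty)
    (hc : ∀ i, ∀ y ∈ Q, IsOpen (P i y))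
    -- `x̃` is a projected solution of `QVI(T,K)`
    (xt : Strat N d) (hxt : xt ∈ X)
    (hQVI : ∃ yt ∈ K xt,
      (‖yt - xt‖ = ⨅ w : X, ‖yt - (w : Strat N d)‖) ∧
      ∃ ys ∈ T yt, ∀ z ∈ K xt, ⟪ys, z - yt⟫ ≥ 0) :
    -- `x̃` is a projected solution of the GNEP `Γ`
    ∃ yt : Strat N d,
      (‖yt - xt‖ = ⨅ w : X, ‖yt - (w : Strat N d)‖) ∧
      ∀ i : Fin N, yt i ∈ Ki i xt ∧ P i yt ∩ Ki i xt = ∅ := by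
  obtain ⟨yt, hyK, hproj, ys, hys, hvi⟩ := hQVI
  rw [hK] at hyK
  refine ⟨yt, hproj, fun i => ⟨hyK i, ?_⟩⟩
  rw [Set.eq_empty_iff_forall_notMem]
  rintro z ⟨hzP, hzK⟩
  have hyQ : yt ∈ Q := by
    rw [hQ]
    intro j
    exact subset_convexHull ℝ _ (subset_closure (Set.mem_biUnion hxt (hyK j)))
  have hopen := hc i yt hyQ
  -- every unit vector of the polar cone is strictly negative on `z - y_i`
  have hsub : ({w : Vec (d i) | ∀ z ∈ convexHull ℝ (P i yt), ⟪w, z - yt i⟫ ≤ 0}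
      ∩ Metric.sphere (0 : Vec (d i)) 1) ⊆ {w : Vec (d i) | ⟪w, z - yt i⟫ < 0} := by
    rintro w ⟨hw, hw1⟩
    have hw1 : ‖w‖ = 1 := by simpa using hw1
    obtain ⟨e, he, hball⟩ := Metric.isOpen_iff.1 hopen z hzP
    have hmem : z + (e / 2) • w ∈ P i yt := by
      apply hball
      rw [Metric.mem_ball, dist_eq_norm, add_sub_cancel_left, norm_smul, hw1, Real.norm_eq_abs,
        abs_of_pos (half_pos he)]
      linarith
    have h := hw _ (subset_convexHull ℝ _ hmem)
    rw [add_sub_right_comm, inner_add_right, inner_smul_right, real_inner_self_eq_norm_sq,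
      hw1] at h
    show ⟪w, z - yt i⟫ < 0
    linarith
  have hconv : Convex ℝ {w : Vec (d i) | ⟪w, z - yt i⟫ < 0} := by
    intro a ha' b hb' s t hs ht hst
    simp only [Set.mem_setOf_eq] at ha' hb' ⊢
    rw [inner_add_left, real_inner_smul_left, real_inner_smul_left]
    rcases hs.eq_or_lt with h0 | h0
    · subst h0
      have : t = 1 := by linarith
      subst this
      linarith
    · have h1 := mul_neg_of_pos_of_neg h0 ha'
      have h2 := mul_nonpos_of_nonneg_of_nonpos ht hb'.le
      linarith
  rw [hT] at hys
  have hneg : ⟪ys i, z - yt i⟫ < 0 := convexHull_min hsub hconv (hys i)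
  -- test the variational inequality with a unilateral deviation
  have hz := hvi (WithLp.toLp 2 (Function.update (fun j => yt j) i z)) (by
    rw [hK]
    intro j
    by_cases hj : j = i
    · subst hj
      simpa using hzK
    · simpa [hj] using hyK j)
  rw [PiLp.inner_apply, Finset.sum_eq_single i] at hz
  · simp only [PiLp.sub_apply, Function.update_self] at hz
    linarith
  · intro j _ hj
    simp [hj]
  · simp
end

section
/- Let X ⊆ ℝ^n be nonempty, closed and convex, T : ℝ^n ⇉ ℝ^n a set-valued map and K : X ⇉ ℝ^n a set-valued map. Then x̃ ∈ X is a projected solution of QVI(T,K) if and only if there exist ỹ ∈ K(x̃) and ỹ* ∈ T(ỹ) such that ⟨x̃ − ỹ, η − x̃⟩ + ⟨ỹ*, z − ỹ⟩ ≥ 0 for all η ∈ X and all z ∈ K(x̃). -/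
open scoped RealInnerProductSpace

/-- For `X ⊆ ℝ^n` nonempty closed convex and set-valued maps
`T : ℝ^n ⇉ ℝ^n`, `K : X ⇉ ℝ^n`, a point `x̃ ∈ X` is a projected solution of
`QVI(T,K)` iff there are `ỹ ∈ K(x̃)` and `ỹ* ∈ T(ỹ)` with
`⟨x̃ − ỹ, η − x̃⟩ + ⟨ỹ*, z − ỹ⟩ ≥ 0` for all `η ∈ X` and `z ∈ K(x̃)`. -/
theorem projected_QVI_solution_iff (n : ℕ)
    (X : Set (Vec n)) (hXne : X.Nonempty) (hXclosed : IsClosed X) (hXconv : Convex ℝ X)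
    (T : Vec n → Set (Vec n)) (K : Vec n → Set (Vec n))
    (xt : Vec n) (hxt : xt ∈ X) :
    (∃ yt ∈ K xt,
        (‖yt - xt‖ = ⨅ w : X, ‖yt - (w : Vec n)‖) ∧
        ∃ ys ∈ T yt, ∀ z ∈ K xt, ⟪ys, z - yt⟫ ≥ 0)
    ↔ (∃ yt ∈ K xt, ∃ ys ∈ T yt,
        ∀ η ∈ X, ∀ z ∈ K xt, ⟪xt - yt, η - xt⟫ + ⟪ys, z - yt⟫ ≥ 0) := by
  have hneg : ∀ y η : Vec n, ⟪xt - y, η - xt⟫ = -⟪y - xt, η - xt⟫ := by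
    intro y η
    rw [← inner_neg_left, neg_sub]
  constructor
  · rintro ⟨yt, hy, hproj, ys, hys, hz⟩
    rw [norm_eq_iInf_iff_real_inner_le_zero hXconv hxt] at hproj
    refine ⟨yt, hy, ys, hys, fun η hη z hzK => ?_⟩
    have h1 := hproj η hη
    have h2 := hz z hzK
    rw [hneg]
    linarith
  · rintro ⟨yt, hy, ys, hys, h⟩
    refine ⟨yt, hy, ?_, ys, hys, fun z hz => ?_⟩
    · rw [norm_eq_iInf_iff_real_inner_le_zero hXconv hxt]
      intro w hw
      have h1 := h w hw yt hy
      rw [hneg, sub_self yt, inner_zero_right] at h1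
      linarith
    · have h1 := h xt hxt z hz
      rw [sub_self xt, inner_zero_right] at h1
      linarith
end

section
/- Assume for each player i: (a) X_i ⊆ ℝ^{n_i} is nonempty, convex and closed; (b) K_i : X ⇉ ℝ^{n_i} has nonempty values; (c) P_i(y) is an open subset of ℝ^{n_i} for every y ∈ ∏_i co(cl(K_i(X))). Suppose x̃ ∈ X and ỹ ∈ K(x̃) = ∏_i K_i(x̃) are such that there exists ỹ* ∈ T(ỹ), with T(y) = ∏_i co(((co(P_i(y)) − {y_i})°) ∩ S_i) and S_i the unit sphere of ℝ^{n_i}, satisfying ⟨x̃ − ỹ, η − x̃⟩ + ⟨ỹ*, z − ỹ⟩ ≥ 0 for all η ∈ X and all z ∈ K(x̃). Then x̃ is a projected solution of the generalized Nash game Γ = (X_i,K_i,P_i)_i. -/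
open scoped RealInnerProductSpace

/-- Under (a) each `X_i` nonempty convex closed, (b) each `K_i`
nonempty-valued on `X`, (c) each `P_i(y)` open for `y ∈ ∏_i co(cl(K_i(X)))`: if
`x̃ ∈ X`, `ỹ ∈ K(x̃)` and some `ỹ* ∈ T(ỹ)` satisfy
`⟨x̃ − ỹ, η − x̃⟩ + ⟨ỹ*, z − ỹ⟩ ≥ 0` for all `η ∈ X`, `z ∈ K(x̃)`, then `x̃` is a
projected solution of the generalized Nash game `Γ = (X_i, K_i, P_i)_i`. -/
theorem projected_GNEP_solution_of_combined_QVI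
    (N : ℕ) (hN : 1 ≤ N) (d : Fin N → ℕ)
    (Xi : ∀ i : Fin N, Set (Vec (d i)))
    (Ki : ∀ i : Fin N, Strat N d → Set (Vec (d i)))
    (P : ∀ i : Fin N, Strat N d → Set (Vec (d i)))
    -- the joint choice set `X = ∏ X_i`
    (X : Set (Strat N d)) (hX : X = {x : Strat N d | ∀ i, x i ∈ Xi i})
    -- the set `∏_i co(cl(K_i(X)))`
    (Q : Set (Strat N d))
    (hQ : Q = {y : Strat N d | ∀ i, y i ∈ convexHull ℝ (closure (⋃ x ∈ X, Ki i x))})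
    -- the joint constraint map `K(x) = ∏ K_i(x)`
    (K : Strat N d → Set (Strat N d))
    (hK : ∀ x : Strat N d, K x = {y : Strat N d | ∀ i, y i ∈ Ki i x})
    -- the map `T(y) = ∏_i co((co(P_i(y)) − {y_i})° ∩ S_i)`
    (T : Strat N d → Set (Strat N d))
    (hT : ∀ y : Strat N d, T y = {v : Strat N d | ∀ i : Fin N,
      v i ∈ convexHull ℝ
        ({w : Vec (d i) | ∀ z ∈ convexHull ℝ (P i y), ⟪w, z - y i⟫ ≤ 0}
          ∩ Metric.sphere (0 : Vec (d i)) 1)})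
    -- hypotheses (a), (b), (c)
    (ha : ∀ i, (Xi i).Nonempty ∧ Convex ℝ (Xi i) ∧ IsClosed (Xi i))
    (hb : ∀ i, ∀ x ∈ X, (Ki i x).Nonempty)
    (hc : ∀ i, ∀ y ∈ Q, IsOpen (P i y))
    -- the combined quasi-variational inequality
    (xt : Strat N d) (hxt : xt ∈ X)
    (yt : Strat N d) (hyt : yt ∈ K xt)
    (ys : Strat N d) (hys : ys ∈ T yt)
    (hineq : ∀ η ∈ X, ∀ z ∈ K xt, ⟪xt - yt, η - xt⟫ + ⟪ys, z - yt⟫ ≥ 0) :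
    -- `x̃` is a projected solution of the GNEP `Γ`
    ∃ y : Strat N d,
      (‖y - xt‖ = ⨅ w : X, ‖y - (w : Strat N d)‖) ∧
      ∀ i : Fin N, y i ∈ Ki i xt ∧ P i y ∩ Ki i xt = ∅ := by
  have hyt' : ∀ i, yt i ∈ Ki i xt := by
    rw [hK] at hyt; exact hyt
  have hys' := hys
  rw [hT] at hys'
  refine ⟨yt, ?_, fun i => ⟨hyt' i, ?_⟩⟩
  · haveI : Nonempty X := ⟨⟨xt, hxt⟩⟩
    apply le_antisymm
    · refine le_ciInf fun w => ?_
      have h := hineq w w.2 yt hyt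
      rw [sub_self, inner_zero_right, add_zero] at h
      have e : yt - (w : Strat N d) = -((xt - yt) + ((w : Strat N d) - xt)) := by abel
      rw [e, norm_neg, norm_sub_rev yt xt]
      have h2 := norm_add_sq_real (xt - yt) ((w : Strat N d) - xt)
      refine le_of_sq_le_sq ?_ (norm_nonneg _)
      nlinarith [sq_nonneg ‖(w : Strat N d) - xt‖]
    · exact ciInf_le (f := fun w : X => ‖yt - (w : Strat N d)‖)
        ⟨0, by rintro _ ⟨w, rfl⟩; exact norm_nonneg _⟩ ⟨xt, hxt⟩
  · rw [Set.eq_empty_iff_forall_notMem]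
    rintro p ⟨hpP, hpK⟩
    have hopen : IsOpen (P i yt) := by
      apply hc
      rw [hQ]
      intro j
      exact subset_convexHull ℝ _ (subset_closure (Set.mem_biUnion hxt (hyt' j)))
    have hneg : ys i ∈ {w : Vec (d i) | ⟪w, p - yt i⟫ < 0} := by
      refine convexHull_min ?_ ?_ (hys' i)
      · rintro w ⟨hw, hw1⟩
        have hw1' : ‖w‖ = 1 := by simpa using hw1
        obtain ⟨ε, hε, hball⟩ := Metric.isOpen_iff.1 hopen p hpP
        have hm : p + (ε / 2) • w ∈ P i yt := by
          apply hball
          rw [mem_ball_iff_norm, add_sub_cancel_left, norm_smul, hw1', Real.norm_eq_abs,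
            abs_of_pos (by positivity)]
          linarith
        have h := hw _ (subset_convexHull ℝ _ hm)
        have e : p + (ε / 2) • w - yt i = (p - yt i) + (ε / 2) • w := by abel
        rw [e, inner_add_right, inner_smul_right, real_inner_self_eq_norm_sq, hw1'] at h
        show ⟪w, p - yt i⟫ < 0
        nlinarith
      · intro a ha b hb s t hs ht hst
        simp only [Set.mem_setOf_eq] at ha hb ⊢
        rw [inner_add_left, real_inner_smul_left, real_inner_smul_left]
        rcases hs.eq_or_lt with h0 | h0
        · have : t = 1 := by linarith
          subst this; subst h0; linarith
        · have h1 := mul_neg_of_pos_of_neg h0 ha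
          have h2 := mul_nonpos_of_nonneg_of_nonpos ht hb.le
          linarith
    let z : Strat N d := WithLp.toLp 2 (Function.update (fun j => yt j) i p)
    have hzi : z i = p := by simp [z]
    have hzj : ∀ j, j ≠ i → z j = yt j := fun j hj => by simp [z, hj]
    have hz : z ∈ K xt := by
      rw [hK]
      intro j
      by_cases hj : j = i
      · subst hj; rw [hzi]; exact hpK
      · rw [hzj j hj]; exact hyt' j
    have h := hineq xt hxt z hz
    rw [sub_self, inner_zero_right, zero_add, PiLp.inner_apply,
      Finset.sum_eq_single i (fun j _ hj => by rw [PiLp.sub_apply, hzj j hj, sub_self, inner_zero_right])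
        (by simp), PiLp.sub_apply, hzi] at h
    exact absurd hneg (not_lt.2 h)
end

section
/- Assume for each player i: (a) X_i ⊆ ℝ^{n_i} is nonempty, compact and convex; (b) K_i : X ⇉ ℝ^{n_i} is a closed and lower semicontinuous set-valued map with nonempty convex values; (c) P_i : ℝ^n ⇉ ℝ^{n_i} is lower semicontinuous; (d) for every y ∈ ∏_i co(cl(K_i(X))), the set P_i(y) is open and y_i ∉ co(P_i(y)). If, in addition, K(X) = ⋃_{x∈X} ∏_i K_i(x) is relatively compact, then the generalized Nash game Γ = (X_i,K_i,P_i)_i admits a projected solution. -/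
open scoped RealInnerProductSpace

section
open Set Metric MeasureTheory
lemma exists_proj {E : Type*} [NormedAddCommGroup E] [InnerProductSpace ℝ E]
    {X : Set E} (hne : X.Nonempty) (hc : IsComplete X) (hcv : Convex ℝ X) :
    ∃ p : E → E, LipschitzWith 1 p ∧ (∀ y, p y ∈ X) ∧
      (∀ y, ‖y - p y‖ = ⨅ w : X, ‖y - (w : E)‖) ∧ ∀ y ∈ X, p y = y := by
  choose p hp using exists_norm_eq_iInf_of_complete_convex hne hc hcv
  have hin : ∀ y, ∀ w ∈ X, inner ℝ (y - p y) (w - p y) ≤ 0 := fun y =>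
    (norm_eq_iInf_iff_real_inner_le_zero hcv (hp y).1).1 (hp y).2
  refine ⟨p, ?_, fun y => (hp y).1, fun y => (hp y).2, ?_⟩
  · refine LipschitzWith.of_dist_le_mul fun x y => ?_
    simp only [NNReal.coe_one, one_mul, dist_eq_norm]
    have h1 := hin x (p y) (hp y).1
    have h2 := hin y (p x) (hp x).1
    have h3 : ‖p x - p y‖ ^ 2 ≤ inner ℝ (x - y) (p x - p y) := by
      rw [← real_inner_self_eq_norm_sq]
      simp only [inner_sub_left, inner_sub_right] at h1 h2 ⊢
      linarith
    have h4 := real_inner_le_norm (x - y) (p x - p y)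
    by_contra! hlt
    nlinarith [norm_nonneg (x - y), norm_nonneg (p x - p y)]
  · intro y hy
    have := hin y y hy
    rw [real_inner_self_eq_norm_sq] at this
    have h : ‖y - p y‖ = 0 := by nlinarith [norm_nonneg (y - p y)]
    exact (sub_eq_zero.1 (norm_eq_zero.1 h)).symm

/-- Lagrange: value at one of a polynomial from values at nodes. -/
lemma exists_interp (n : ℕ) (τ : ℝ) (hτ : 0 < τ) :
    ∃ (c v : Fin (n+1) → ℝ), (∀ j, 0 < v j ∧ v j < τ) ∧
      ∀ q : Polynomial ℝ, q.natDegree ≤ n → q.eval 1 = ∑ j, c j * q.eval (v j) := by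
  let v : Fin (n+1) → ℝ := fun j => τ * ((j : ℝ) + 1) / (n + 2)
  have hv : Function.Injective v := by
    intro a b hab
    simp only [v] at hab
    have : ((n:ℝ) + 2) ≠ 0 := by positivity
    field_simp at hab
    ext
    have : (a : ℝ) = b := by linarith
    exact_mod_cast this
  refine ⟨fun j => (Lagrange.basis Finset.univ v j).eval 1, v, fun j => ⟨by positivity, ?_⟩, ?_⟩
  · simp only [v]
    rw [div_lt_iff₀ (by positivity)]
    have : (j : ℝ) < n + 1 := by exact_mod_cast j.2
    nlinarith
  · intro q hq
    have := Lagrange.eq_interpolate (f := q) (s := Finset.univ) (v := v) hv.injOn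
      (by
        refine lt_of_le_of_lt Polynomial.degree_le_natDegree ?_
        simp only [Finset.card_univ, Fintype.card_fin]
        exact_mod_cast Nat.lt_succ_of_le hq)
    conv_lhs => rw [this]
    rw [Lagrange.interpolate_apply, Polynomial.eval_finsetSum]
    refine Finset.sum_congr rfl fun j _ => ?_
    simp [mul_comm]

lemma det_poly {E : Type*} [NormedAddCommGroup E] [NormedSpace ℝ E]
    [FiniteDimensional ℝ E] (A : E →L[ℝ] E) :
    ∃ q : Polynomial ℝ, q.natDegree ≤ Module.finrank ℝ E ∧
      ∀ t : ℝ, q.eval t = (ContinuousLinearMap.id ℝ E + t • A).det := by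
  let b := Module.finBasis ℝ E
  let M := LinearMap.toMatrix b b (A : E →ₗ[ℝ] E)
  refine ⟨_, (Polynomial.natDegree_det_X_add_C_le M 1).trans (by simp), fun t => ?_⟩
  have : (ContinuousLinearMap.id ℝ E + t • A).det =
      LinearMap.det (LinearMap.id + t • (A : E →ₗ[ℝ] E)) := rfl
  rw [this, ← LinearMap.det_toMatrix b, ← Polynomial.coe_evalRingHom, RingHom.map_det]
  congr 1
  ext i j
  simp [M, Matrix.one_apply, add_comm, apply_ite]
  rw [mul_comm]
  


lemma no_retraction {E : Type*} [NormedAddCommGroup E] [InnerProductSpace ℝ E]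
    [FiniteDimensional ℝ E] (f : E → E)
    (hf : ∀ x ∈ closedBall (0:E) 1, ContDiffAt ℝ 1 f x)
    (h1 : ∀ x ∈ closedBall (0:E) 1, ‖f x‖ = 1)
    (h2 : ∀ x, ‖x‖ = 1 → f x = x) : False := by
  borelize E
  let μ : Measure E := Measure.addHaar
  set D := closedBall (0:E) 1 with hD
  have hDc : IsCompact D := isCompact_closedBall 0 1
  have hDcv : Convex ℝ D := convex_closedBall 0 1
  let h : E → E := fun x => f x - x
  have hh : ∀ x ∈ D, ContDiffAt ℝ 1 h x := fun x hx => (hf x hx).sub contDiffAt_id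
  obtain ⟨L, hL⟩ : ∃ L, LipschitzOnWith L h D :=
    ContDiffOn.exists_lipschitzOnWith (n := 1) (fun x hx => (hh x hx).contDiffWithinAt)
      one_ne_zero hDcv hDc
  have hcont : ContinuousOn (fderiv ℝ h) D := fun x hx =>
    ((hh x hx).continuousAt_fderiv one_ne_zero).continuousWithinAt
  obtain ⟨C, hC⟩ := (hDc.image_of_continuousOn hcont).isBounded.exists_norm_le
  let M : ℝ := max (max L C) 1
  have hM0 : 0 < M := lt_of_lt_of_le one_pos (le_max_right _ _)
  have hLM : (L:ℝ) ≤ M := (le_max_left _ _).trans (le_max_left _ _)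
  have hCM : C ≤ M := (le_max_right _ _).trans (le_max_left _ _)
  -- key identity for small t
  have key : ∀ t : ℝ, 0 < t → t < 1 / M →
      ∫ x in D, (ContinuousLinearMap.id ℝ E + t • fderiv ℝ h x).det ∂μ = μ.real D := by
    intro t ht htM
    have htM' : t * M < 1 := by rwa [lt_div_iff₀ hM0] at htM
    have ht1 : t ≤ 1 := by
      have : 1 ≤ M := le_max_right _ _
      nlinarith
    let F : E → E := fun x => x + t • h x
    have hder : ∀ x ∈ D, HasFDerivWithinAt F (ContinuousLinearMap.id ℝ E + t • fderiv ℝ h x) D x := by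
      intro x hx
      exact ((hasFDerivAt_id x).add
        (((hh x hx).differentiableAt one_ne_zero).hasFDerivAt.const_smul t)).hasFDerivWithinAt
    have hinj : InjOn F D := by
      intro x hx y hy hxy
      have e : x - y = t • (h y - h x) := by
        simp only [F] at hxy
        rw [smul_sub, sub_eq_sub_iff_add_eq_add, hxy, add_comm]
      have hd := hL.dist_le_mul y hy x hx
      rw [dist_eq_norm, dist_comm, dist_eq_norm] at hd
      have e2 : ‖x - y‖ = t * ‖h y - h x‖ := by
        conv_lhs => rw [e]
        rw [norm_smul, Real.norm_of_nonneg ht.le]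
      by_contra hne
      have hpos : 0 < ‖x - y‖ := norm_pos_iff.2 (sub_ne_zero.2 hne)
      have : t * ‖h y - h x‖ ≤ t * (M * ‖x - y‖) := by gcongr; exact hd.trans (by gcongr)
      nlinarith
    have himg : F '' D = D := by
      apply Subset.antisymm
      · rintro _ ⟨x, hx, rfl⟩
        have : F x = (1 - t) • x + t • f x := by simp only [F, h]; module
        rw [this]
        exact hDcv hx (by simp [hD, h1 x hx]) (by linarith) ht.le (by ring)
      · intro y hy
        obtain ⟨p, hp1, hp2, hp3, hp4⟩ := exists_proj (X := D) ⟨0, by simp [hD]⟩ hDc.isComplete hDcv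
        have hG : ContractingWith (NNReal.mk (t * M) (by positivity)) (fun x => y - t • h (p x)) := by
          refine ⟨by rw [← NNReal.coe_lt_coe]; exact htM', LipschitzWith.of_dist_le_mul fun x z => ?_⟩
          have e1 := hL.dist_le_mul (p x) (hp2 x) (p z) (hp2 z)
          have e2 := hp1.dist_le_mul x z
          simp only [NNReal.coe_one, one_mul] at e2
          rw [dist_sub_left, dist_smul₀, Real.norm_of_nonneg ht.le, NNReal.coe_mk, mul_assoc]
          gcongr
          exact e1.trans (by gcongr)
        obtain ⟨x, hx, -⟩ := hG.exists_fixedPoint 0 (edist_ne_top _ _)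
        have hx' : y - t • h (p x) = x := hx
        have hxD : x ∈ D := by
          by_contra hxD
          have hpx : ‖p x‖ = 1 := by
            refine le_antisymm (by simpa [hD] using hp2 x) ?_
            have hin := (norm_eq_iInf_iff_real_inner_le_zero hDcv (hp2 x)).1 (hp3 x)
            have hu : 0 < ‖x - p x‖ := norm_pos_iff.2 (sub_ne_zero.2 fun hh => hxD (hh ▸ hp2 x))
            have h5 := hin ((‖x - p x‖)⁻¹ • (x - p x)) (by
              simp [hD, norm_smul, inv_mul_cancel₀ hu.ne'])
            rw [inner_sub_right, inner_smul_right, real_inner_self_eq_norm_sq, pow_two, ← mul_assoc,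
              inv_mul_cancel₀ hu.ne', one_mul] at h5
            have h6 := real_inner_le_norm (x - p x) (p x)
            by_contra! hlt
            nlinarith
          have hz : h (p x) = 0 := by simp only [h]; rw [h2 _ hpx, sub_self]
          rw [hz, smul_zero, sub_zero] at hx'
          exact hxD (hx' ▸ hy)
        refine ⟨x, hxD, ?_⟩
        simp only [F]
        rw [hp4 x hxD] at hx'
        exact (sub_eq_iff_eq_add.1 hx').symm
    have hpos : ∀ x ∈ D, 0 < (ContinuousLinearMap.id ℝ E + t • fderiv ℝ h x).det := by
      intro x hx
      obtain ⟨q, -, hq⟩ := det_poly (fderiv ℝ h x)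
      rw [← hq]
      by_contra! hneg
      have h0 : q.eval 0 = 1 := by rw [hq]; simp [ContinuousLinearMap.det]
      obtain ⟨s, hs, hs0⟩ := intermediate_value_Icc' ht.le (q.continuous.continuousOn)
        (show (0:ℝ) ∈ Icc (q.eval t) (q.eval 0) from ⟨hneg, by rw [h0]; norm_num⟩)
      simp only at hs0
      rw [hq] at hs0
      have hker : ∃ v : E, v ≠ 0 ∧ (ContinuousLinearMap.id ℝ E + s • fderiv ℝ h x) v = 0 := by
        have := LinearMap.bot_lt_ker_of_det_eq_zero
          (f := ((ContinuousLinearMap.id ℝ E + s • fderiv ℝ h x : E →L[ℝ] E) : E →ₗ[ℝ] E)) hs0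
        obtain ⟨v, hv, hv0⟩ := SetLike.exists_of_lt this
        exact ⟨v, by simpa using hv0, by simpa using hv⟩
      obtain ⟨v, hv0, hv⟩ := hker
      have hv1 : v = -(s • fderiv ℝ h x v) := eq_neg_of_add_eq_zero_left (by simpa using hv)
      have hv2 : ‖v‖ ≤ s * (M * ‖v‖) := by
        conv_lhs => rw [hv1]
        rw [norm_neg, norm_smul, Real.norm_of_nonneg hs.1]
        refine mul_le_mul_of_nonneg_left ?_ hs.1
        refine ((fderiv ℝ h x).le_opNorm v).trans ?_
        gcongr
        exact (hC _ ⟨x, hx, rfl⟩).trans hCM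
      have : 0 < ‖v‖ := norm_pos_iff.2 hv0
      have : s * M ≤ t * M := by gcongr; exact hs.2
      nlinarith
    have := integral_image_eq_integral_abs_det_fderiv_smul μ (measurableSet_closedBall (x := (0:E)) (ε := 1)) hder hinj
      (fun _ => (1:ℝ))
    change ∫ x in F '' D, (1:ℝ) ∂μ = ∫ x in D, _ ∂μ at this
    rw [himg] at this
    simp only [integral_const, smul_eq_mul, mul_one, MeasurableSet.univ, measureReal_restrict_apply, univ_inter] at this
    rw [this]
    exact setIntegral_congr_fun measurableSet_closedBall fun x hx => (abs_of_pos (hpos x hx)).symm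
  obtain ⟨c, v, hv, hcv⟩ := exists_interp (Module.finrank ℝ E) (1 / M) (by positivity)
  have hsum : ∑ j, c j = 1 := by
    have := hcv 1 (by simp)
    simpa using this.symm
  have hid : ∀ x, (ContinuousLinearMap.id ℝ E + (1:ℝ) • fderiv ℝ h x).det =
      ∑ j, c j * (ContinuousLinearMap.id ℝ E + v j • fderiv ℝ h x).det := by
    intro x
    obtain ⟨q, hq1, hq⟩ := det_poly (fderiv ℝ h x)
    simp only [← hq]
    exact hcv q hq1
  have hint : ∀ t : ℝ, IntegrableOn (fun x => (ContinuousLinearMap.id ℝ E + t • fderiv ℝ h x).det) D μ := by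
    intro t
    refine ContinuousOn.integrableOn_compact hDc ?_
    exact ContinuousLinearMap.continuous_det.comp_continuousOn (continuousOn_const.add (hcont.const_smul t))
  have hI : ∫ x in D, (ContinuousLinearMap.id ℝ E + (1:ℝ) • fderiv ℝ h x).det ∂μ = μ.real D := by
    simp_rw [hid]
    rw [integral_finsetSum _ (fun j _ => (hint (v j)).const_mul (c j))]
    simp_rw [integral_const_mul]
    rw [Finset.sum_congr rfl fun j _ => by rw [key (v j) (hv j).1 (hv j).2], ← Finset.sum_mul, hsum, one_mul]
  have hball : D =ᵐ[μ] ball (0:E) 1 := by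
    rw [hD, ← ball_union_sphere]
    exact union_ae_eq_left_of_ae_eq_empty
      (ae_eq_empty.2 (Measure.addHaar_sphere_of_ne_zero μ 0 one_ne_zero))
  have hZ : ∫ x in D, (ContinuousLinearMap.id ℝ E + (1:ℝ) • fderiv ℝ h x).det ∂μ = 0 := by
    rw [setIntegral_congr_set hball]
    refine setIntegral_eq_zero_of_forall_eq_zero fun x hx => ?_
    have hxD : x ∈ D := ball_subset_closedBall hx
    have hfx := ((hf x hxD).differentiableAt one_ne_zero)
    have e : ContinuousLinearMap.id ℝ E + (1:ℝ) • fderiv ℝ h x = fderiv ℝ f x := by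
      have : fderiv ℝ h x = fderiv ℝ f x - ContinuousLinearMap.id ℝ E := by
        simp only [h]
        rw [fderiv_fun_sub hfx differentiableAt_fun_id, fderiv_fun_id]
      rw [this]; simp
    rw [e]
    by_contra hne
    have hperp : ∀ w, inner ℝ (f x) (fderiv ℝ f x w) = 0 := by
      intro w
      have hc1 : HasFDerivAt (fun y => inner ℝ (f y) (f y)) _ x := hfx.hasFDerivAt.inner ℝ hfx.hasFDerivAt
      have hc2 : HasFDerivAt (fun y => inner ℝ (f y) (f y)) (0 : E →L[ℝ] ℝ) x := by
        refine (hasFDerivAt_const (1:ℝ) x).congr_of_eventuallyEq ?_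
        filter_upwards [isOpen_ball.mem_nhds hx] with y hy
        rw [real_inner_self_eq_norm_sq, h1 y (ball_subset_closedBall hy)]; norm_num
      have := congrArg (fun T : E →L[ℝ] ℝ => T w) (hc1.unique hc2)
      simp [real_inner_comm] at this
      linarith
    have hsurj : Function.Surjective (fderiv ℝ f x) := by
      have hu : IsUnit (LinearMap.det ((fderiv ℝ f x : E →L[ℝ] E) : E →ₗ[ℝ] E)) := isUnit_iff_ne_zero.2 hne
      exact (LinearEquiv.ofIsUnitDet (v := Module.finBasis ℝ E) (v' := Module.finBasis ℝ E) (f := ((fderiv ℝ f x : E →L[ℝ] E) : E →ₗ[ℝ] E)) (by rwa [LinearMap.det_toMatrix])).surjective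
    obtain ⟨w, hw⟩ := hsurj (f x)
    have := hperp w
    rw [hw, real_inner_self_eq_norm_sq, h1 x hxD] at this
    norm_num at this
  have : 0 < μ.real D := by
    rw [Measure.real, ENNReal.toReal_pos_iff]
    exact ⟨measure_closedBall_pos μ 0 one_pos, hDc.measure_lt_top⟩
  linarith

lemma brouwer_ball {E : Type*} [NormedAddCommGroup E] [InnerProductSpace ℝ E]
    [FiniteDimensional ℝ E] (g : E → E) (hg : Continuous g)
    (hgD : ∀ x ∈ closedBall (0:E) 1, g x ∈ closedBall (0:E) 1) :
    ∃ x ∈ closedBall (0:E) 1, g x = x := by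
  by_contra! hne
  obtain ⟨x0, hx0, hmin⟩ := (isCompact_closedBall (0:E) 1).exists_isMinOn ⟨0, by simp⟩
    (f := fun x => ‖x - g x‖) (by fun_prop)
  set δ := ‖x0 - g x0‖ with hδ
  have hδ0 : 0 < δ := norm_pos_iff.2 (sub_ne_zero.2 (hne x0 hx0).symm)
  have hδm : ∀ x ∈ closedBall (0:E) 1, δ ≤ ‖x - g x‖ := fun x hx => hmin hx
  let ε := δ / 4
  have hε : 0 < ε := by positivity
  obtain ⟨g1, hg1, hd, -⟩ := hg.exists_contDiff_approx (ε := fun _ => ε) 1 continuous_const fun _ => hε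
  let g2 : E → E := fun x => (1 + ε)⁻¹ • g1 x
  have hg2 : ContDiff ℝ 1 g2 := ContDiff.const_smul _ hg1
  have e12 : ∀ x, g1 x = (1 + ε) • g2 x := fun x => by
    simp only [g2]; rw [smul_inv_smul₀ (by positivity)]
  have hn2 : ∀ x ∈ closedBall (0:E) 1, ‖g2 x‖ < 1 := by
    intro x hx
    have h1 : ‖g1 x‖ < 1 + ε := by
      have := hd x
      rw [dist_eq_norm] at this
      have h3 : ‖g x‖ ≤ 1 := by simpa using hgD x hx
      have h4 := norm_add_le (g1 x - g x) (g x)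
      rw [sub_add_cancel] at h4
      linarith
    rw [e12, norm_smul, Real.norm_of_nonneg (by positivity)] at h1
    by_contra! hh
    nlinarith
  have hne2 : ∀ x ∈ closedBall (0:E) 1, x - g2 x ≠ 0 := by
    intro x hx h0
    have e : x - g x = (x - g2 x) + (g1 x - g x) - ε • g2 x := by rw [e12]; module
    have h1 := hδm x hx
    rw [e, h0, zero_add] at h1
    have h2 := norm_sub_le (g1 x - g x) (ε • g2 x)
    rw [norm_smul, Real.norm_of_nonneg hε.le] at h2
    have h3 := hd x
    rw [dist_eq_norm] at h3
    have h4 := hn2 x hx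
    have : δ = 4 * ε := by simp only [ε]; ring
    nlinarith
  let u : E → E := fun x => x - g2 x
  have hu : ContDiff ℝ 1 u := contDiff_id.sub hg2
  let a : E → ℝ := fun x => inner ℝ x (u x)
  have ha : ContDiff ℝ 1 a := contDiff_id.inner ℝ hu
  let b : E → ℝ := fun x => inner ℝ (u x) (u x)
  have hb : ContDiff ℝ 1 b := hu.inner ℝ hu
  let D : E → ℝ := fun x => a x ^ 2 + b x * (1 - inner ℝ x x)
  have hD : ContDiff ℝ 1 D := (ha.pow 2).add (hb.mul (contDiff_const.sub (contDiff_id.inner ℝ contDiff_id)))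
  have hbpos : ∀ x ∈ closedBall (0:E) 1, 0 < b x := fun x hx => by
    simp only [b]; rw [real_inner_self_eq_norm_sq]
    have := norm_pos_iff.2 (hne2 x hx)
    positivity
  have hapos : ∀ x, ‖x‖ = 1 → 0 < a x := by
    intro x hx
    simp only [a, u]
    rw [inner_sub_right, real_inner_self_eq_norm_sq, hx]
    have h1 := real_inner_le_norm x (g2 x)
    have h2 := hn2 x (by simp [hx])
    rw [hx] at h1
    linarith
  have hDpos : ∀ x ∈ closedBall (0:E) 1, 0 < D x := by
    intro x hx
    have hx1 : ‖x‖ ≤ 1 := by simpa using hx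
    simp only [D]
    rw [real_inner_self_eq_norm_sq]
    rcases hx1.lt_or_eq with h | h
    · have := hbpos x hx
      have : 0 < 1 - ‖x‖ ^ 2 := by nlinarith [norm_nonneg x]
      positivity
    · have := hapos x h
      rw [h]; norm_num; positivity
  let s : E → ℝ := fun x => (-a x + √(D x)) / b x
  have hs : ∀ x ∈ closedBall (0:E) 1, b x * s x = -a x + √(D x) := fun x hx => by
    simp only [s]; rw [mul_div_cancel₀ _ (hbpos x hx).ne']
  refine no_retraction (fun x => x + s x • u x) ?_ ?_ ?_
  · intro x hx
    refine contDiffAt_id.add (ContDiffAt.smul ?_ hu.contDiffAt)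
    exact (ha.contDiffAt.neg.add (hD.contDiffAt.sqrt (hDpos x hx).ne')).div hb.contDiffAt (hbpos x hx).ne'
  · intro x hx
    have e : ‖x + s x • u x‖ ^ 2 = inner ℝ x x + 2 * s x * a x + s x ^ 2 * b x := by
      rw [← real_inner_self_eq_norm_sq]
      simp only [inner_add_left, inner_add_right, inner_smul_left, inner_smul_right, a, b]
      rw [real_inner_comm x (u x)]
      simp; ring
    have e2 : b x * ‖x + s x • u x‖ ^ 2 = b x * 1 := by
      have hsq := Real.sq_sqrt (hDpos x hx).le
      have : D x = a x ^ 2 + b x * (1 - inner ℝ x x) := rfl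
      have hs' := hs x hx
      rw [e]
      have : (b x * s x + a x) ^ 2 = D x := by rw [hs', neg_add_eq_sub, sub_add_cancel, hsq]
      nlinarith
    have := mul_left_cancel₀ (hbpos x hx).ne' e2
    exact (pow_eq_one_iff_of_nonneg (norm_nonneg _) two_ne_zero).1 this
  · intro x hx
    have : D x = a x ^ 2 := by
      simp only [D]; rw [real_inner_self_eq_norm_sq, hx]; ring
    simp only [s]
    rw [this, Real.sqrt_sq (hapos x hx).le]; simp

lemma brouwer_convex {E : Type*} [NormedAddCommGroup E] [InnerProductSpace ℝ E]
    [FiniteDimensional ℝ E] {Q : Set E} (hne : Q.Nonempty) (hc : IsCompact Q) (hcv : Convex ℝ Q)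
    (g : E → E) (hg : ContinuousOn g Q) (hgQ : ∀ x ∈ Q, g x ∈ Q) :
    ∃ x ∈ Q, g x = x := by
  obtain ⟨p, hp1, hp2, -, hp4⟩ := exists_proj hne hc.isComplete hcv
  obtain ⟨R, hR0, hR⟩ := hc.isBounded.exists_pos_norm_le
  obtain ⟨x, hx, hxe⟩ := brouwer_ball (fun x => R⁻¹ • g (p (R • x)))
    (by
      have : Continuous fun x => g (p (R • x)) :=
        hg.comp_continuous (hp1.continuous.comp (continuous_const_smul R)) fun x => hp2 _
      exact this.const_smul _)
    (by
      intro x _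
      have := hR _ (hgQ _ (hp2 (R • x)))
      simp only [mem_closedBall, dist_zero_right, norm_smul, norm_inv, Real.norm_of_nonneg hR0.le]
      rw [inv_mul_le_iff₀ hR0]; linarith)
  have h1 : g (p (R • x)) = R • x := by
    have := congrArg (fun v => R • v) hxe
    simpa only [smul_inv_smul₀ hR0.ne'] using this
  have hQ : R • x ∈ Q := h1 ▸ hgQ _ (hp2 _)
  exact ⟨R • x, hQ, by rw [hp4 _ hQ] at h1; exact h1⟩

end

section
open Set Metric MeasureTheory Filter Topology

lemma isCompact_convexHull_fd {E : Type*} [NormedAddCommGroup E] [NormedSpace ℝ E]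
    [FiniteDimensional ℝ E] {s : Set E} (hs : IsCompact s) : IsCompact (convexHull ℝ s) := by
  let T : (k : ℕ) → Set E := fun k =>
    (fun q : (Fin k → ℝ) × (Fin k → E) => ∑ i, q.1 i • q.2 i) ''
      (stdSimplex ℝ (Fin k) ×ˢ (univ.pi fun _ => s))
  have hT : ∀ k, IsCompact (T k) := fun k =>
    ((isCompact_stdSimplex ℝ (Fin k)).prod (isCompact_univ_pi fun _ => hs)).image (by fun_prop)
  have : convexHull ℝ s = ⋃ k ∈ Finset.range (Module.finrank ℝ E + 2), T k := by
    apply Subset.antisymm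
    · intro x hx
      obtain ⟨ι, _, z, w, hz, hi, hw, hw1, hx⟩ := eq_pos_convex_span_of_mem_convexHull hx
      have hcard : Fintype.card ι ≤ Module.finrank ℝ E + 1 :=
        hi.card_le_finrank_succ.trans (by gcongr; exact Submodule.finrank_le _)
      let e := Fintype.equivFin ι
      refine mem_biUnion (x := Fintype.card ι) (by simp; omega) ?_
      refine ⟨(w ∘ e.symm, z ∘ e.symm), ⟨⟨fun i => (hw _).le, ?_⟩, fun i _ => hz ⟨_, rfl⟩⟩, ?_⟩
      · rw [← hw1]; exact Equiv.sum_comp e.symm w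
      · rw [← hx]; exact Equiv.sum_comp e.symm (fun i => w i • z i)
    · refine iUnion₂_subset fun k _ => ?_
      rintro _ ⟨⟨w, z⟩, ⟨hw, hz⟩, rfl⟩
      exact (convex_convexHull ℝ s).sum_mem (fun i _ => hw.1 i) hw.2
        fun i _ => subset_convexHull ℝ s (hz i (mem_univ i))
  rw [this]
  exact (Finset.range _).isCompact_biUnion fun k _ => hT k

lemma ball_subset_of_perturb {E : Type*} [NormedAddCommGroup E] [InnerProductSpace ℝ E]
    {T : Set E} (hne : T.Nonempty) (hT : IsCompact T) (hcv : Convex ℝ T) {z : E} {δ : ℝ} (hδ : 0 < δ)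
    (h : ball z (2 * δ) ⊆ thickening δ T) : ball z δ ⊆ T := by
  intro w hw
  by_contra hwT
  obtain ⟨q, hq, hmin⟩ := exists_norm_eq_iInf_of_complete_convex hne hT.isComplete hcv w
  have hin := (norm_eq_iInf_iff_real_inner_le_zero hcv hq).1 hmin
  set v := w - q with hv
  have hv0 : 0 < ‖v‖ := norm_pos_iff.2 (sub_ne_zero.2 fun h => hwT (h ▸ hq))
  have hmem : w + (δ * ‖v‖⁻¹) • v ∈ ball z (2 * δ) := by
    rw [mem_ball, dist_eq_norm] at hw ⊢
    have e : w + (δ * ‖v‖⁻¹) • v - z = (w - z) + (δ * ‖v‖⁻¹) • v := by abel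
    rw [e]
    refine (norm_add_le _ _).trans_lt ?_
    rw [norm_smul, Real.norm_of_nonneg (by positivity), mul_assoc, inv_mul_cancel₀ hv0.ne']
    linarith
  obtain ⟨τ, hτ, hd⟩ := mem_thickening_iff.1 (h hmem)
  rw [dist_eq_norm] at hd
  have h1 := hin τ hτ
  have h2 := real_inner_le_norm v (w + (δ * ‖v‖⁻¹) • v - τ)
  have h3 : inner ℝ v (w + (δ * ‖v‖⁻¹) • v - τ) = ‖v‖ ^ 2 - inner ℝ v (τ - q) + δ * ‖v‖ := by
    have e : w + (δ * ‖v‖⁻¹) • v - τ = v - (τ - q) + (δ * ‖v‖⁻¹) • v := by rw [hv]; abel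
    rw [e, inner_add_right, inner_sub_right, inner_smul_right, real_inner_self_eq_norm_sq]
    field_simp
  rw [h3] at h2
  nlinarith

lemma hull_open {α E : Type*} [TopologicalSpace α] [NormedAddCommGroup E] [InnerProductSpace ℝ E]
    [FiniteDimensional ℝ E] (F : α → Set E) (hF : LscOn F univ) (a : α) (ho : IsOpen (F a))
    {z : E} (hz : z ∈ convexHull ℝ (F a)) :
    ∃ r > 0, ∀ᶠ a' in 𝓝 a, ball z r ⊆ convexHull ℝ (F a') := by
  have hlsc : ∀ x ∈ F a, ∀ δ > 0, ∀ᶠ a' in 𝓝 a, x ∈ thickening δ (F a') := by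
    intro x hx δ hδ
    obtain ⟨U, hU, haU, h⟩ := hF a (mem_univ a) (ball x δ) isOpen_ball ⟨x, hx, mem_ball_self hδ⟩
    filter_upwards [hU.mem_nhds haU] with a' ha'
    obtain ⟨y, hy, hyb⟩ := h a' ⟨ha', mem_univ _⟩
    exact mem_thickening_iff.2 ⟨y, hy, by rw [dist_comm]; exact hyb⟩
  have hlsc2 : ∀ x ∈ convexHull ℝ (F a), ∀ δ > 0, ∀ᶠ a' in 𝓝 a,
      x ∈ thickening δ (convexHull ℝ (F a')) := by
    intro x hx δ hδ
    rw [convexHull_eq_union_convexHull_finite_subsets] at hx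
    simp only [mem_iUnion] at hx
    obtain ⟨t, ht, hx⟩ := hx
    have : ∀ᶠ a' in 𝓝 a, ∀ y ∈ t, y ∈ thickening δ (F a') :=
      (Finset.eventually_all t).2 fun y hy => hlsc y (ht hy) δ hδ
    filter_upwards [this] with a' ha'
    exact convexHull_min (fun y hy => thickening_subset_of_subset δ (subset_convexHull ℝ _) (ha' y hy))
      ((convex_convexHull ℝ _).thickening δ) hx
  obtain ⟨u, hu1, hu2⟩ := (convex_singleton z).exists_subset_interior_convexHull_finset_of_isCompact
    isCompact_singleton (t := convexHull ℝ (F a)) (by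
      rw [nhdsSet_singleton]; exact ho.convexHull.mem_nhds hz)
  obtain ⟨r, hr, hball⟩ := Metric.mem_nhds_iff.1 (mem_interior_iff_mem_nhds.1 (hu1 rfl))
  have hne : u.Nonempty := by
    rw [Finset.nonempty_iff_ne_empty]
    rintro rfl
    have := hball (mem_ball_self hr)
    simp at this
  refine ⟨r / 2, by positivity, ?_⟩
  have : ∀ᶠ a' in 𝓝 a, ∀ y ∈ u, y ∈ thickening (r/2) (convexHull ℝ (F a')) :=
    (Finset.eventually_all u).2 fun y hy =>
      hlsc2 y (hu2 (subset_convexHull ℝ _ hy)) (r/2) (by positivity)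
  filter_upwards [this] with a' ha'
  choose! g hg1 hg2 using fun y hy => mem_thickening_iff.1 (ha' y hy)
  have hsub : convexHull ℝ (g '' u) ⊆ convexHull ℝ (F a') :=
    convexHull_min (by rintro _ ⟨y, hy, rfl⟩; exact hg1 y hy) (convex_convexHull ℝ _)
  refine Subset.trans ?_ hsub
  refine ball_subset_of_perturb ((hne.to_set.image g).convexHull)
    ((u.finite_toSet.image g).isCompact_convexHull ℝ) (convex_convexHull ℝ _) (by positivity) ?_
  rw [mul_div_cancel₀ r two_ne_zero]
  refine hball.trans (convexHull_min (fun y hy => ?_) ((convex_convexHull ℝ _).thickening _))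
  exact mem_thickening_iff.2 ⟨g y, subset_convexHull ℝ _ ⟨y, hy, rfl⟩, hg2 y hy⟩

lemma isCompact_prodSet {N : ℕ} {d : Fin N → ℕ} (Qi : ∀ i, Set (Vec (d i)))
    (h : ∀ i, IsCompact (Qi i)) : IsCompact {y : Strat N d | ∀ i, y i ∈ Qi i} := by
  have := (isCompact_univ_pi h).image
    (PiLp.continuous_toLp 2 (fun i : Fin N => Vec (d i)))
  convert this using 1
  ext y
  constructor
  · intro hy
    exact ⟨WithLp.ofLp y, fun i _ => hy i, rfl⟩
  · rintro ⟨f, hf, rfl⟩ i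
    exact hf i (mem_univ i)

lemma convex_prodSet {N : ℕ} {d : Fin N → ℕ} (Qi : ∀ i, Set (Vec (d i)))
    (h : ∀ i, Convex ℝ (Qi i)) : Convex ℝ {y : Strat N d | ∀ i, y i ∈ Qi i} :=
  fun _ hx _ hy _ _ ha hb hab i => h i (hx i) (hy i) ha hb hab

def upd {N : ℕ} {d : Fin N → ℕ} (y : Strat N d) (i : Fin N) (z : Vec (d i)) : Strat N d :=
  WithLp.toLp 2 (Function.update (WithLp.ofLp y) i z)

lemma upd_self {N : ℕ} {d : Fin N → ℕ} (y : Strat N d) (i : Fin N) (z : Vec (d i)) :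
    (upd y i z) i = z := by simp [upd]

lemma upd_ne {N : ℕ} {d : Fin N → ℕ} (y : Strat N d) (i j : Fin N) (h : j ≠ i) (z : Vec (d i)) :
    (upd y i z) j = y j := by simp [upd, h]

lemma upd_continuous {N : ℕ} {d : Fin N → ℕ} (i : Fin N) (z : Vec (d i)) :
    Continuous fun y : Strat N d => upd y i z :=
  (PiLp.continuous_toLp 2 _).comp ((PiLp.continuous_ofLp 2 _).update i continuous_const)

lemma upd_mem {N : ℕ} {d : Fin N → ℕ} (Qi : ∀ i, Set (Vec (d i))) {y : Strat N d}
    (hy : ∀ i, y i ∈ Qi i) (i : Fin N) {z : Vec (d i)} (hz : z ∈ Qi i) (j : Fin N) :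
    (upd y i z) j ∈ Qi j := by
  by_cases h : j = i
  · subst h; rwa [upd_self]
  · rw [upd_ne _ _ _ h]; exact hy j

lemma game {N : ℕ} {d : Fin N → ℕ} (Qi : ∀ i, Set (Vec (d i))) (Q : Set (Strat N d))
    (hQ : Q = {y : Strat N d | ∀ i, y i ∈ Qi i}) (hne : Q.Nonempty)
    (hc : ∀ i, IsCompact (Qi i)) (hcv : ∀ i, Convex ℝ (Qi i))
    (Φ : ∀ i, Strat N d → Set (Vec (d i)))
    (hΦc : ∀ i, ∀ y ∈ Q, Convex ℝ (Φ i y)) (hΦs : ∀ i, ∀ y ∈ Q, Φ i y ⊆ Qi i)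
    (hΦo : ∀ i, ∀ y ∈ Q, ∀ z ∈ Φ i y, ∀ᶠ y' in 𝓝 y, y' ∈ Q → z ∈ Φ i y')
    (hΦi : ∀ i, ∀ y ∈ Q, y i ∉ Φ i y) : ∃ y ∈ Q, ∀ i, Φ i y = ∅ := by
  have hQc : IsCompact Q := hQ ▸ isCompact_prodSet Qi hc
  have hQcv : Convex ℝ Q := hQ ▸ convex_prodSet Qi hcv
  have hmQ : ∀ w, w ∈ Q ↔ ∀ i, w i ∈ Qi i := fun w => by rw [hQ]; rfl
  by_contra! hcon
  have h1 : ∀ y : Q, ∃ i, ∃ z ∈ Φ i y, ∃ U : Set (Strat N d), (∀ y' ∈ U, y' ∈ Q → z ∈ Φ i y') ∧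
      IsOpen U ∧ (y : Strat N d) ∈ U := by
    intro y
    obtain ⟨i, z, hz⟩ := hcon y y.2
    exact ⟨i, z, hz, eventually_nhds_iff.1 (hΦo i y y.2 z hz)⟩
  choose I z hz U hU hUo hyU using h1
  obtain ⟨t, ht⟩ := hQc.elim_finite_subcover U hUo fun y hy => mem_iUnion.2 ⟨⟨y, hy⟩, hyU _⟩
  obtain ⟨f, hf⟩ := PartitionOfUnity.exists_isSubordinate hQc.isClosed (fun k : t => U k)
    (fun k => hUo k) (by
      intro y hy
      obtain ⟨k, hk, hyk⟩ := mem_iUnion₂.1 (ht hy)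
      exact mem_iUnion.2 ⟨⟨k, hk⟩, hyk⟩)
  have hsum : ∀ y ∈ Q, ∑ k : t, f k y = 1 := fun y hy => by
    rw [← f.sum_eq_one hy, finsum_eq_sum_of_fintype]
  have hmem : ∀ (k : t) (y), y ∈ Q → f k y ≠ 0 → z k ∈ Φ (I k) y := fun k y hy h =>
    hU k y (hf k (subset_tsupport _ h)) hy
  have hzQ : ∀ k : t, z k ∈ Qi (I k) := fun k => hΦs _ _ k.1.2 (hz k)
  obtain ⟨y, hy, hfix⟩ := brouwer_convex hne hQc hQcv
    (fun y => ∑ k : t, f k y • upd y (I k) (z k))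
    (Continuous.continuousOn (continuous_finsetSum _ fun k _ =>
      (f k).continuous.smul (upd_continuous _ _)))
    (by
      intro y hy
      refine hQcv.sum_mem (fun k _ => f.nonneg k y) (hsum y hy) fun k _ => ?_
      exact (hmQ _).2 fun j => upd_mem Qi ((hmQ y).1 hy) _ (hzQ k) j)
  obtain ⟨k0, hk0⟩ : ∃ k0 : t, f k0 y ≠ 0 := by
    by_contra! h
    have := hsum y hy
    simp [h] at this
  let i := I k0
  let S := Finset.univ.filter fun k : t => I k = i ∧ f k y ≠ 0
  refine hΦi i y hy ?_
  have hpos : 0 < ∑ k ∈ S, f k y :=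
    Finset.sum_pos' (fun k _ => f.nonneg k y)
      ⟨k0, by simp [S, i, hk0], lt_of_le_of_ne (f.nonneg k0 y) hk0.symm⟩
  have hcm := (hΦc i y hy).centerMass_mem (t := S) (w := fun k => f k y)
    (z := fun k => (upd y (I k) (z k)) i) (fun k _ => f.nonneg k y) hpos (by
      intro k hk
      obtain ⟨-, hk1, hk2⟩ := Finset.mem_filter.1 hk
      have := hmem k y hy hk2
      clear_value i
      subst hk1
      rwa [upd_self])
  convert hcm using 1
  have e1 : ∑ k : t, f k y • (upd y (I k) (z k)) i = y i := by
    conv_rhs => rw [← hfix]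
    simp
  have e2 : ∑ k : t, f k y • y i = y i := by rw [← Finset.sum_smul, hsum y hy, one_smul]
  have e3 : ∑ k : t, f k y • ((upd y (I k) (z k)) i - y i) = 0 := by
    simp only [smul_sub, Finset.sum_sub_distrib, e1, e2, sub_self]
  have e4 : ∑ k ∈ S, f k y • ((upd y (I k) (z k)) i - y i) = 0 := by
    rw [← e3]
    refine Finset.sum_subset (Finset.subset_univ _) fun k _ hk => ?_
    simp only [S, Finset.mem_filter, Finset.mem_univ, true_and, not_and, not_not] at hk
    by_cases h : I k = i
    · rw [hk h, zero_smul]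
    · rw [upd_ne _ _ _ (Ne.symm h), sub_self, smul_zero]
  simp only [smul_sub, Finset.sum_sub_distrib, ← Finset.sum_smul] at e4
  rw [Finset.centerMass, sub_eq_zero.1 e4, inv_smul_smul₀ hpos.ne']

end

/-- Under (a) each `X_i` nonempty compact convex, (b) each `K_i`
closed and l.s.c. with nonempty convex values on `X`, (c) each `P_i` l.s.c.,
(d) for every `y ∈ ∏_i co(cl(K_i(X)))` the set `P_i(y)` is open and
`y_i ∉ co(P_i(y))`, and with `K(X)` relatively compact, the generalized Nash game
`Γ = (X_i, K_i, P_i)_i` admits a projected solution. -/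
theorem exists_projected_solution_GNEP_compact
    (N : ℕ) (hN : 1 ≤ N) (d : Fin N → ℕ)
    (Xi : ∀ i : Fin N, Set (Vec (d i)))
    (Ki : ∀ i : Fin N, Strat N d → Set (Vec (d i)))
    (P : ∀ i : Fin N, Strat N d → Set (Vec (d i)))
    -- the joint choice set `X = ∏ X_i`
    (X : Set (Strat N d)) (hX : X = {x : Strat N d | ∀ i, x i ∈ Xi i})
    -- the set `∏_i co(cl(K_i(X)))`
    (Q : Set (Strat N d))
    (hQ : Q = {y : Strat N d | ∀ i, y i ∈ convexHull ℝ (closure (⋃ x ∈ X, Ki i x))})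
    -- the joint constraint map `K(x) = ∏ K_i(x)`
    (K : Strat N d → Set (Strat N d))
    (hK : ∀ x : Strat N d, K x = {y : Strat N d | ∀ i, y i ∈ Ki i x})
    -- (a) each `X_i` is nonempty, compact and convex
    (ha : ∀ i, (Xi i).Nonempty ∧ IsCompact (Xi i) ∧ Convex ℝ (Xi i))
    -- (b) each `K_i` is a closed l.s.c. map with nonempty convex values on `X`
    (hbclosed : ∀ i, IsClosed {q : Strat N d × Vec (d i) | q.1 ∈ X ∧ q.2 ∈ Ki i q.1})
    (hblsc : ∀ i, LscOn (Ki i) X)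
    (hbval : ∀ i, ∀ x ∈ X, (Ki i x).Nonempty ∧ Convex ℝ (Ki i x))
    -- (c) each `P_i` is lower semicontinuous
    (hc : ∀ i, LscOn (P i) (Set.univ : Set (Strat N d)))
    -- (d) `P_i(y)` is open and `y_i ∉ co(P_i(y))` for every `y ∈ Q`
    (hd : ∀ i, ∀ y ∈ Q, IsOpen (P i y) ∧ y i ∉ convexHull ℝ (P i y))
    -- `K(X)` is relatively compact
    (hKrel : IsCompact (closure (⋃ x ∈ X, K x))) :
    -- the GNEP `Γ` admits a projected solution
    ∃ xt ∈ X, ∃ yt : Strat N d,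
      (‖yt - xt‖ = ⨅ w : X, ‖yt - (w : Strat N d)‖) ∧
      ∀ i : Fin N, yt i ∈ Ki i xt ∧ P i yt ∩ Ki i xt = ∅ := by
  have hmX : ∀ w, w ∈ X ↔ ∀ i, w i ∈ Xi i := fun w => by rw [hX]; rfl
  have hXc : IsCompact X := hX ▸ isCompact_prodSet Xi fun i => (ha i).2.1
  have hXcv : Convex ℝ X := hX ▸ convex_prodSet Xi fun i => (ha i).2.2
  have hXne : X.Nonempty := by
    choose x hx using fun i => (ha i).1
    exact ⟨WithLp.toLp 2 x, (hmX _).2 hx⟩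
  obtain ⟨p, hp1, hp2, hp3, -⟩ := exists_proj hXne hXc.isComplete hXcv
  have hpc : Continuous p := hp1.continuous
  let Ci : ∀ i, Set (Vec (d i)) := fun i => closure (⋃ x ∈ X, Ki i x)
  have hKC : ∀ i, ∀ x ∈ X, Ki i x ⊆ Ci i := fun i x hx =>
    (Set.subset_biUnion_of_mem (u := fun x => Ki i x) hx).trans subset_closure
  have hCc : ∀ i, IsCompact (Ci i) := by
    intro i
    have hcont : Continuous fun y : Strat N d => y i := PiLp.continuous_apply 2 _ i
    refine (hKrel.image hcont).closure_of_subset ?_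
    refine Set.iUnion₂_subset fun x hx k hk => ?_
    choose g hg using fun j => (hbval j x hx).1
    refine ⟨upd (WithLp.toLp 2 g) i k, subset_closure (Set.mem_biUnion hx ?_), upd_self _ _ _⟩
    rw [hK]
    exact fun j => upd_mem (fun j => Ki j x) hg i hk j
  let Qi : ∀ i, Set (Vec (d i)) := fun i => convexHull ℝ (Ci i)
  have hQic : ∀ i, IsCompact (Qi i) := fun i => isCompact_convexHull_fd (hCc i)
  have hQicv : ∀ i, Convex ℝ (Qi i) := fun i => convex_convexHull ℝ _
  have hKQ : ∀ i y, Ki i (p y) ⊆ Qi i := fun i y =>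
    (hKC i _ (hp2 y)).trans (subset_convexHull ℝ _)
  have hQc : IsCompact Q := hQ ▸ isCompact_prodSet Qi hQic
  have hQne : Q.Nonempty := by
    obtain ⟨x, hx⟩ := hXne
    choose g hg using fun j => (hbval j x hx).1
    refine ⟨WithLp.toLp 2 g, ?_⟩
    rw [hQ]
    exact fun i => subset_convexHull ℝ _ (hKC i x hx (hg i))
  -- approximate equilibria
  have happ : ∀ ε > 0, ∃ y ∈ Q, ∀ i, (∃ k ∈ Ki i (p y), dist (y i) k ≤ ε) ∧
      ∀ z ∈ Ki i (p y), z ∉ convexHull ℝ (P i y) := by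
    intro ε hε
    let B : ∀ i, Set (Strat N d) := fun i => {y | y ∈ Q ∧ ∃ k ∈ Ki i (p y), dist (y i) k ≤ ε}
    have hB : ∀ i, IsClosed (B i) := by
      intro i
      have hcont : Continuous fun y : Strat N d => y i := PiLp.continuous_apply 2 _ i
      have h1 : IsClosed {q : Strat N d × Vec (d i) |
          (p q.1 ∈ X ∧ q.2 ∈ Ki i (p q.1)) ∧ dist (q.1 i) q.2 ≤ ε} :=
        ((hbclosed i).preimage (f := fun q : Strat N d × Vec (d i) => (p q.1, q.2))
          (by fun_prop)).inter
          (isClosed_le ((hcont.comp continuous_fst).dist continuous_snd) continuous_const)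
      have h2 := (((hQc.prod (hCc i)).inter_right h1).image continuous_fst).isClosed
      convert h2 using 1
      ext y
      constructor
      · rintro ⟨hy, k, hk, hd⟩
        exact ⟨(y, k), ⟨⟨hy, hKC i _ (hp2 y) hk⟩, ⟨hp2 y, hk⟩, hd⟩, rfl⟩
      · rintro ⟨⟨y, k⟩, ⟨⟨hy, -⟩, ⟨-, hk⟩, hd⟩, rfl⟩
        exact ⟨hy, k, hk, hd⟩
    let Φ : ∀ i, Strat N d → Set (Vec (d i)) := fun i y =>
      {z | z ∈ Qi i ∧ z ∈ Metric.thickening ε (Ki i (p y)) ∧ (y ∈ B i → z ∈ convexHull ℝ (P i y))}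
    obtain ⟨y, hy, hΦ⟩ := game Qi Q hQ hQne hQic hQicv Φ
      (by
        intro i y hy
        have h2 := ((hbval i _ (hp2 y)).2.thickening ε)
        by_cases hyB : y ∈ B i
        · have : Φ i y = Qi i ∩ (Metric.thickening ε (Ki i (p y)) ∩ convexHull ℝ (P i y)) := by
            ext z; simp [Φ, hyB]; try tauto
          rw [this]
          exact (hQicv i).inter (h2.inter (convex_convexHull ℝ _))
        · have : Φ i y = Qi i ∩ Metric.thickening ε (Ki i (p y)) := by
            ext z; simp [Φ, hyB]; try tauto
          rw [this]
          exact (hQicv i).inter h2)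
      (fun i y hy z hz => hz.1)
      (by
        rintro i y hy z ⟨hz1, hz2, hz3⟩
        obtain ⟨k, hk, hkd⟩ := Metric.mem_thickening_iff.1 hz2
        obtain ⟨U, hU, hpU, hUk⟩ := hblsc i (p y) (hp2 y) (Metric.ball z ε) Metric.isOpen_ball
          ⟨k, hk, by rw [Metric.mem_ball, dist_comm]; exact hkd⟩
        have ev1 : ∀ᶠ y' in nhds y, p y' ∈ U := hpc.continuousAt (hU.mem_nhds hpU)
        have ev2 : ∀ᶠ y' in nhds y, y' ∈ B i → z ∈ convexHull ℝ (P i y') := by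
          by_cases hyB : y ∈ B i
          · obtain ⟨r, hr, hev⟩ := hull_open (P i) (hc i) y (hd i y hy).1 (hz3 hyB)
            filter_upwards [hev] with y' hy' _
            exact hy' (Metric.mem_ball_self hr)
          · filter_upwards [(hB i).isOpen_compl.mem_nhds hyB] with y' hy' h
            exact absurd h hy'
        filter_upwards [ev1, ev2] with y' h1 h2 hy'
        refine ⟨hz1, ?_, h2⟩
        obtain ⟨k', hk', hkb⟩ := hUk (p y') ⟨h1, hp2 y'⟩
        exact Metric.mem_thickening_iff.2 ⟨k', hk', by rw [dist_comm]; exact hkb⟩)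
      (by
        rintro i y hy ⟨-, h2, h3⟩
        obtain ⟨k, hk, hkd⟩ := Metric.mem_thickening_iff.1 h2
        exact (hd i y hy).2 (h3 ⟨hy, k, hk, hkd.le⟩))
    refine ⟨y, hy, fun i => ⟨?_, ?_⟩⟩
    · by_contra hno
      obtain ⟨k, hk⟩ := (hbval i _ (hp2 y)).1
      have : k ∈ Φ i y := ⟨hKQ i y hk, Metric.self_subset_thickening hε _ hk,
        fun h => absurd h.2 hno⟩
      rw [hΦ i] at this
      exact this
    · intro k hk hkP
      have : k ∈ Φ i y := ⟨hKQ i y hk, Metric.self_subset_thickening hε _ hk, fun _ => hkP⟩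
      rw [hΦ i] at this
      exact this
  choose y hyQ hyk hyP using fun n : ℕ =>
    (happ (1 / ((n : ℝ) + 1)) (by positivity)).imp fun y h =>
      (⟨h.1, fun i => (h.2 i).1, fun i => (h.2 i).2⟩ :
        y ∈ Q ∧ (∀ i, ∃ k ∈ Ki i (p y), dist (y i) k ≤ 1 / ((n : ℝ) + 1)) ∧
          ∀ i, ∀ z ∈ Ki i (p y), z ∉ convexHull ℝ (P i y))
  obtain ⟨yt, hyt, φ, hφ, hlim⟩ := hQc.tendsto_subseq hyQ
  have hplim : Filter.Tendsto (fun n => p (y (φ n))) Filter.atTop (nhds (p yt)) := (hpc.tendsto yt).comp hlim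
  refine ⟨p yt, hp2 yt, yt, hp3 yt, fun i => ⟨?_, ?_⟩⟩
  · choose k hk hkd using fun n => hyk n i
    have hcont : Continuous fun y : Strat N d => y i := PiLp.continuous_apply 2 _ i
    have h1 : Filter.Tendsto (fun n => (y (φ n)) i) Filter.atTop (nhds (yt i)) := (hcont.tendsto yt).comp hlim
    have h0 : Filter.Tendsto (fun n => dist ((y (φ n)) i) (k (φ n))) Filter.atTop (nhds 0) :=
      squeeze_zero (fun _ => dist_nonneg) (fun n => hkd (φ n))
        (tendsto_one_div_add_atTop_nhds_zero_nat.comp hφ.tendsto_atTop)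
    have h2 : Filter.Tendsto (fun n => k (φ n)) Filter.atTop (nhds (yt i)) := (tendsto_iff_of_dist h0).1 h1
    exact ((hbclosed i).mem_of_tendsto (hplim.prodMk_nhds h2)
      (Filter.Eventually.of_forall fun n => ⟨hp2 _, hk (φ n)⟩)).2
  · rw [Set.eq_empty_iff_forall_notMem]
    rintro z ⟨hzP, hzK⟩
    obtain ⟨r, hr, hev⟩ := hull_open (P i) (hc i) yt (hd i yt hyt).1 (subset_convexHull ℝ _ hzP)
    obtain ⟨U, hU, hpU, hUk⟩ := hblsc i (p yt) (hp2 yt) (Metric.ball z r) Metric.isOpen_ball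
      ⟨z, hzK, Metric.mem_ball_self hr⟩
    obtain ⟨n, hn1, hn2⟩ := ((hlim.eventually hev).and (hplim.eventually (hU.mem_nhds hpU))).exists
    obtain ⟨z', hz', hzb⟩ := hUk _ ⟨hn2, hp2 _⟩
    exact hyP (φ n) i z' hz' (hn1 hzb)
end
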